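/- Let W₀ ~ N_m(0, Γ̄) and W ~ N_d(0, Ψ) be independent, let U have the distribution of (W₀ | W₀ + τ > 0), and set Y = ξ + H U + W. Then the density of Y at y equals φ_d(y; ξ, Ψ + H Γ̄ Hᵀ) · Φ_m(μ(y) + τ; 0, Σ*) / Φ_m(τ; 0, Γ̄), where μ(y) = Γ̄ Hᵀ (Ψ + H Γ̄ Hᵀ)^{-1}(y − ξ) and Σ* = Γ̄ − Γ̄ Hᵀ (Ψ + H Γ̄ Hᵀ)^{-1} H Γ̄. -/

import Mathlib

open Matrix MeasureTheory ProbabilityTheory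

/-- The multivariate Gaussian density with mean `μ` and covariance `S`. -/
noncomputable def gaussPdf {ι : Type*} [Fintype ι] [DecidableEq ι] (μ : ι → ℝ)
    (S : Matrix ι ι ℝ) (x : ι → ℝ) : ℝ :=
  (2 * Real.pi) ^ (-(Fintype.card ι : ℝ) / 2) * S.det ^ (-(1 : ℝ) / 2) *
    Real.exp (-((x - μ) ⬝ᵥ (S⁻¹ *ᵥ (x - μ))) / 2)

/-- `Φ_k(a; 0, S)`: the centered multivariate Gaussian cdf (componentwise). -/
noncomputable def gaussCdf {ι : Type*} [Fintype ι] [DecidableEq ι]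
    (S : Matrix ι ι ℝ) (a : ι → ℝ) : ℝ :=
  ∫ v in {v : ι → ℝ | ∀ i, v i ≤ a i}, gaussPdf (0 : ι → ℝ) S v

/-!
The vector `(U, Y)` with `U ~ N(μ, Γ)` and `Y = ξ + H U + W` is jointly Gaussian, and the two Schur
complements of its covariance matrix factor its density in two ways: as the density of `U` times
that of `Y` given `U`, and as the density of `Y` times that of `U` given `Y`. Conditioning on an
event `U ∈ s` restricts the joint density to `s`, so integrating the second factorization over
`u ∈ s` multiplies the Gaussian density of `Y` by the ratio of the conditional to the unconditional
probability of `s`. For the orthant `u + τ > 0` both probabilities are values of Gaussian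
distribution functions.
-/

section GaussPdf

variable {ι κ : Type*} [Fintype ι] [DecidableEq ι] [Fintype κ] [DecidableEq κ]

lemma gaussPdf_pos {S : Matrix ι ι ℝ} (hS : S.PosDef) (μ x : ι → ℝ) : 0 < gaussPdf μ S x := by
  have := hS.det_pos
  have := Real.pi_pos
  unfold gaussPdf
  positivity

@[fun_prop]
lemma continuous_gaussPdf (μ : ι → ℝ) (S : Matrix ι ι ℝ) : Continuous (gaussPdf μ S) := by
  unfold gaussPdf
  simp only [dotProduct, mulVec]
  fun_prop

lemma gaussPdf_zero_sub (S : Matrix ι ι ℝ) (μ x : ι → ℝ) :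
    gaussPdf 0 S (x - μ) = gaussPdf μ S x := by
  simp only [gaussPdf, sub_zero]

lemma gaussPdf_self_sub (S : Matrix ι ι ℝ) (μ v : ι → ℝ) :
    gaussPdf μ S (μ - v) = gaussPdf 0 S v := by
  simp only [gaussPdf, sub_sub_cancel_left, mulVec_neg, neg_dotProduct_neg, sub_zero]

lemma gaussPdf_submatrix_equiv (e : κ ≃ ι) (μ : ι → ℝ) (S : Matrix ι ι ℝ) (x : ι → ℝ) :
    gaussPdf (μ ∘ e) (S.submatrix e e) (x ∘ e) = gaussPdf μ S x := by
  have hsub : x ∘ e - μ ∘ e = (x - μ) ∘ e := rfl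
  simp only [gaussPdf, Fintype.card_congr e, det_submatrix_equiv_self, inv_submatrix_equiv, hsub,
    submatrix_mulVec_equiv, Function.comp_assoc, Equiv.self_comp_symm, Function.comp_id,
    comp_equiv_dotProduct_comp_equiv]

end GaussPdf

section Integrability

lemma integrable_exp_neg_dotProduct_self_div_two {ι : Type*} [Fintype ι] :
    Integrable fun x : ι → ℝ ↦ Real.exp (-(x ⬝ᵥ x) / 2) := by
  have hprod : Integrable fun x : ι → ℝ ↦ ∏ i, Real.exp (-(1 / 2) * x i ^ 2) :=
    Integrable.fintype_prod fun _ ↦ integrable_exp_neg_mul_sq one_half_pos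
  refine hprod.congr (ae_of_all _ fun x ↦ ?_)
  simp only [dotProduct, ← Real.exp_sum, ← Finset.mul_sum, ← sq]
  ring_nf

variable {ι : Type*} [Fintype ι] [DecidableEq ι]

lemma integrable_comp_mulVec {E : Type*} [NormedAddCommGroup E] {f : (ι → ℝ) → E}
    (hf : Integrable f) {C : Matrix ι ι ℝ} (hC : C.det ≠ 0) :
    Integrable fun x ↦ f (C *ᵥ x) := by
  have hmap : Integrable f (Measure.map (toLin' C) volume) := by
    rw [Real.map_matrix_volume_pi_eq_smul_volume_pi hC]
    exact hf.smul_measure ENNReal.ofReal_ne_top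
  exact hmap.comp_measurable (LinearMap.continuous_on_pi _).measurable

open scoped MatrixOrder Matrix.Norms.L2Operator in
lemma exists_eq_transpose_mul_self_of_posDef {S : Matrix ι ι ℝ} (hS : S.PosDef) :
    ∃ C : Matrix ι ι ℝ, C.det ≠ 0 ∧ S = Cᵀ * C := by
  obtain ⟨C, hC, hSC⟩ :=
    CStarAlgebra.isStrictlyPositive_iff_eq_star_mul_self.mp hS.isStrictlyPositive
  exact ⟨C, ((isUnit_iff_isUnit_det C).mp hC).ne_zero, hSC⟩

lemma integrable_gaussPdf {S : Matrix ι ι ℝ} (hS : S.PosDef) (μ : ι → ℝ) :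
    Integrable (gaussPdf μ S) := by
  obtain ⟨C, hC, hSC⟩ := exists_eq_transpose_mul_self_of_posDef hS.inv
  have hquad (x : ι → ℝ) : (C *ᵥ x) ⬝ᵥ (C *ᵥ x) = x ⬝ᵥ (S⁻¹ *ᵥ x) := by
    rw [hSC, ← mulVec_mulVec, dotProduct_mulVec x, vecMul_transpose]
  have hexp := integrable_comp_mulVec integrable_exp_neg_dotProduct_self_div_two hC
  simp only [hquad] at hexp
  exact (hexp.comp_sub_right μ).const_mul _

end Integrability

section GaussMeasure

lemma isOpen_setOf_forall_pos_add {ι : Type*} [Finite ι] (τ : ι → ℝ) :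
    IsOpen {u : ι → ℝ | ∀ i, 0 < u i + τ i} := by
  simp only [Set.ofPred_forall]
  exact isOpen_iInter_of_finite fun i ↦ isOpen_lt (by fun_prop) (by fun_prop)

variable {ι : Type*} [Fintype ι] [DecidableEq ι]

/-- The normal law `N(μ, S)` on `ι → ℝ`, given by its Lebesgue density; it is the normal law only
for positive definite `S`. -/
noncomputable def gaussMeasure (μ : ι → ℝ) (S : Matrix ι ι ℝ) : Measure (ι → ℝ) :=
  volume.withDensity fun x ↦ ENNReal.ofReal (gaussPdf μ S x)

instance (μ : ι → ℝ) (S : Matrix ι ι ℝ) : SFinite (gaussMeasure μ S) := by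
  unfold gaussMeasure
  infer_instance

lemma isOpenPosMeasure_gaussMeasure {S : Matrix ι ι ℝ} (hS : S.PosDef) (μ : ι → ℝ) :
    (gaussMeasure μ S).IsOpenPosMeasure := by
  refine (withDensity_absolutelyContinuous' ?_ ?_ : volume ≪ gaussMeasure μ S).isOpenPosMeasure
  · fun_prop
  · exact ae_of_all _ fun x ↦ (ENNReal.ofReal_pos.mpr (gaussPdf_pos hS μ x)).ne'

-- The reflection `u = μ - v` turns the orthant `u + τ > 0` into `v < μ + τ`.
lemma gaussMeasure_setOf_forall_pos_add {S : Matrix ι ι ℝ} (hS : S.PosDef) (μ τ : ι → ℝ) :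
    gaussMeasure μ S {u | ∀ i, 0 < u i + τ i} = ENNReal.ofReal (gaussCdf S (μ + τ)) := by
  have hs := (isOpen_setOf_forall_pos_add τ).measurableSet
  have hpre : (fun v ↦ μ - v) ⁻¹' {u : ι → ℝ | ∀ i, 0 < u i + τ i} =
      Set.univ.pi fun i ↦ Set.Iio ((μ + τ) i) := by
    ext v
    simp [sub_add_eq_add_sub]
  calc gaussMeasure μ S {u | ∀ i, 0 < u i + τ i}
      = ∫⁻ v in (fun v ↦ μ - v) ⁻¹' {u | ∀ i, 0 < u i + τ i},
          ENNReal.ofReal (gaussPdf 0 S v) := by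
        rw [gaussMeasure, withDensity_apply _ hs,
          ← (Measure.measurePreserving_sub_left volume μ).setLIntegral_comp_preimage hs
            (by fun_prop)]
        simp only [gaussPdf_self_sub]
    _ = ∫⁻ v in Set.Iic (μ + τ), ENNReal.ofReal (gaussPdf 0 S v) := by
        rw [hpre]
        exact setLIntegral_congr Measure.univ_pi_Iio_ae_eq_Iic
    _ = ENNReal.ofReal (gaussCdf S (μ + τ)) :=
        (ofReal_integral_eq_lintegral_ofReal (integrable_gaussPdf hS 0).integrableOn
          (ae_of_all _ fun v ↦ (gaussPdf_pos hS 0 v).le)).symm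

lemma gaussCdf_pos {S : Matrix ι ι ℝ} (hS : S.PosDef) (a : ι → ℝ) : 0 < gaussCdf S a := by
  have := isOpenPosMeasure_gaussMeasure hS 0
  rw [← ENNReal.ofReal_pos, ← zero_add a, ← gaussMeasure_setOf_forall_pos_add hS]
  exact (isOpen_setOf_forall_pos_add a).measure_pos _ ⟨fun i ↦ 1 - a i, fun i ↦ by simp⟩

end GaussMeasure

section BlockFactorization

variable {ι κ : Type*} [Fintype ι] [DecidableEq ι] [Fintype κ] [DecidableEq κ]

lemma sumElim_dotProduct_inv_fromBlocks_mulVec {R : Type*} [CommRing R] {A : Matrix ι ι R}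
    {B : Matrix ι κ R} {D : Matrix κ κ R} (hD : IsUnit D) (hD_symm : D.IsSymm)
    (hS : IsUnit (A - B * D⁻¹ * Bᵀ)) (u : ι → R) (y : κ → R) :
    Sum.elim u y ⬝ᵥ ((fromBlocks A B Bᵀ D)⁻¹ *ᵥ Sum.elim u y) =
      y ⬝ᵥ (D⁻¹ *ᵥ y) + (u - (B * D⁻¹) *ᵥ y) ⬝ᵥ
        ((A - B * D⁻¹ * Bᵀ)⁻¹ *ᵥ (u - (B * D⁻¹) *ᵥ y)) := by
  have := hD.invertible
  rw [← invOf_eq_nonsing_inv D] at hS ⊢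
  have := hS.invertible
  have := fromBlocks₂₂Invertible A B Bᵀ D
  have hgain : (B * ⅟D)ᵀ = ⅟D * Bᵀ := by
    rw [transpose_mul, invOf_eq_nonsing_inv, transpose_nonsing_inv, hD_symm.eq]
  rw [← invOf_eq_nonsing_inv, ← invOf_eq_nonsing_inv, invOf_fromBlocks₂₂_eq, fromBlocks_mulVec,
    sumElim_dotProduct_sumElim]
  have hmove (w : ι → R) : ((B * ⅟D) *ᵥ y) ⬝ᵥ w = y ⬝ᵥ ((⅟D * Bᵀ) *ᵥ w) := by
    rw [← hgain, dotProduct_mulVec, vecMul_transpose]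
  simp only [Sum.elim_comp_inl, Sum.elim_comp_inr, sub_dotProduct, hmove, mulVec_sub, add_mulVec,
    neg_mulVec, dotProduct_add, dotProduct_sub, dotProduct_neg, mulVec_mulVec, Matrix.mul_assoc]
  ring

lemma gaussPdf_fromBlocks₂₂ {A : Matrix ι ι ℝ} {B : Matrix ι κ ℝ} {D : Matrix κ κ ℝ}
    (hD : D.PosDef) (hS : (A - B * D⁻¹ * Bᵀ).PosDef) (μ u : ι → ℝ) (ν y : κ → ℝ) :
    gaussPdf (Sum.elim μ ν) (fromBlocks A B Bᵀ D) (Sum.elim u y) =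
      gaussPdf ν D y * gaussPdf (μ + (B * D⁻¹) *ᵥ (y - ν)) (A - B * D⁻¹ * Bᵀ) u := by
  have hdet : (fromBlocks A B Bᵀ D).det = D.det * (A - B * D⁻¹ * Bᵀ).det := by
    have := hD.isUnit.invertible
    rw [det_fromBlocks₂₂, invOf_eq_nonsing_inv]
  have hsub : Sum.elim u y - Sum.elim μ ν = Sum.elim (u - μ) (y - ν) :=
    Sum.elim_sub_sub u μ y ν |>.symm
  have hpi : (2 * Real.pi) ^ (-(Fintype.card (ι ⊕ κ) : ℝ) / 2) =
      (2 * Real.pi) ^ (-(Fintype.card ι : ℝ) / 2) *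
        (2 * Real.pi) ^ (-(Fintype.card κ : ℝ) / 2) := by
    rw [← Real.rpow_add Real.two_pi_pos, Fintype.card_sum]
    push_cast
    ring_nf
  simp only [gaussPdf, hdet, hpi, Real.mul_rpow hD.det_pos.le hS.det_pos.le, hsub, ← sub_sub,
    sumElim_dotProduct_inv_fromBlocks_mulVec hD.isUnit
      (isHermitian_iff_isSymm.mp hD.isHermitian) hS.isUnit, neg_add, add_div, Real.exp_add]
  ring

lemma gaussPdf_fromBlocks₁₁ {A : Matrix ι ι ℝ} {B : Matrix ι κ ℝ} {D : Matrix κ κ ℝ}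
    (hA : A.PosDef) (hS : (D - Bᵀ * A⁻¹ * B).PosDef) (μ u : ι → ℝ) (ν y : κ → ℝ) :
    gaussPdf (Sum.elim μ ν) (fromBlocks A B Bᵀ D) (Sum.elim u y) =
      gaussPdf μ A u * gaussPdf (ν + (Bᵀ * A⁻¹) *ᵥ (u - μ)) (D - Bᵀ * A⁻¹ * B) y := by
  rw [← gaussPdf_submatrix_equiv (Equiv.sumComm κ ι)]
  have h := gaussPdf_fromBlocks₂₂ (B := Bᵀ) hA (by simpa using hS) ν y μ u
  simpa using h

end BlockFactorization

section LinearGaussianModel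

variable {ι κ : Type*} [Fintype ι]

/-- The covariance of the response `Y = ξ + H U + W` in the linear Gaussian model, where
`U ~ N(μ, Γ)` and `W ~ N(0, Ψ)` are independent. -/
def responseCov (Γ : Matrix ι ι ℝ) (H : Matrix κ ι ℝ) (Ψ : Matrix κ κ ℝ) : Matrix κ κ ℝ :=
  Ψ + H * Γ * Hᵀ

variable {Γ : Matrix ι ι ℝ} {Ψ : Matrix κ κ ℝ}

lemma posDef_responseCov [Finite κ] (hΓ : Γ.PosSemidef) (H : Matrix κ ι ℝ) (hΨ : Ψ.PosDef) :
    (responseCov Γ H Ψ).PosDef := by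
  rw [responseCov, ← conjTranspose_eq_transpose_of_trivial]
  exact hΨ.add_posSemidef (hΓ.mul_mul_conjTranspose_same H)

variable [Fintype κ] [DecidableEq κ]

/-- The matrix `K` of the regression of `U` on the response: the conditional mean of `U` given
`Y = y` is `μ + K (y - 𝔼[Y])`. -/
noncomputable def regressionMatrix (Γ : Matrix ι ι ℝ) (H : Matrix κ ι ℝ) (Ψ : Matrix κ κ ℝ) :
    Matrix ι κ ℝ :=
  Γ * Hᵀ * (responseCov Γ H Ψ)⁻¹

/-- The conditional covariance `Σ*` of `U` given the response. -/
noncomputable def conditionalCov (Γ : Matrix ι ι ℝ) (H : Matrix κ ι ℝ) (Ψ : Matrix κ κ ℝ) :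
    Matrix ι ι ℝ :=
  Γ - Γ * Hᵀ * (responseCov Γ H Ψ)⁻¹ * H * Γ

lemma conditionalCov_eq_inv [DecidableEq ι] (hΓ : Γ.PosDef) (H : Matrix κ ι ℝ)
    (hΨ : Ψ.PosDef) :
    conditionalCov Γ H Ψ = (Γ⁻¹ + Hᵀ * Ψ⁻¹ * H)⁻¹ := by
  have hΓ_inv := nonsing_inv_nonsing_inv Γ ((isUnit_iff_isUnit_det _).mp hΓ.isUnit)
  have hΨ_inv := nonsing_inv_nonsing_inv Ψ ((isUnit_iff_isUnit_det _).mp hΨ.isUnit)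
  have hwoodbury := add_mul_mul_inv_eq_sub Γ⁻¹ Hᵀ Ψ⁻¹ H hΓ.inv.isUnit hΨ.inv.isUnit
    (by simpa only [hΓ_inv, hΨ_inv, responseCov] using
      (posDef_responseCov hΓ.posSemidef H hΨ).isUnit)
  rw [hwoodbury, hΓ_inv, hΨ_inv]
  rfl

lemma posDef_conditionalCov (hΓ : Γ.PosDef) (H : Matrix κ ι ℝ) (hΨ : Ψ.PosDef) :
    (conditionalCov Γ H Ψ).PosDef := by
  classical
  have hprecision := posDef_responseCov hΨ.inv.posSemidef Hᵀ hΓ.inv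
  rw [responseCov, transpose_transpose] at hprecision
  rw [conditionalCov_eq_inv hΓ H hΨ]
  exact hprecision.inv

lemma gaussPdf_mul_gaussPdf_linear [DecidableEq ι] (hΓ : Γ.PosDef) (H : Matrix κ ι ℝ)
    (hΨ : Ψ.PosDef) (μ u : ι → ℝ) (ξ y : κ → ℝ) :
    gaussPdf μ Γ u * gaussPdf (ξ + H *ᵥ u) Ψ y =
      gaussPdf (ξ + H *ᵥ μ) (responseCov Γ H Ψ) y *
        gaussPdf (μ + regressionMatrix Γ H Ψ *ᵥ (y - (ξ + H *ᵥ μ))) (conditionalCov Γ H Ψ) u := by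
  have hB : (Γ * Hᵀ)ᵀ = H * Γ := by
    rw [transpose_mul, transpose_transpose, (isHermitian_iff_isSymm.mp hΓ.isHermitian).eq]
  have hH : (Γ * Hᵀ)ᵀ * Γ⁻¹ = H := by
    rw [hB, mul_nonsing_inv_cancel_right _ _ ((isUnit_iff_isUnit_det _).mp hΓ.isUnit)]
  have hmean : ξ + H *ᵥ μ + H *ᵥ (u - μ) = ξ + H *ᵥ u := by
    rw [mulVec_sub]
    abel
  have hΨ_schur : responseCov Γ H Ψ - (Γ * Hᵀ)ᵀ * Γ⁻¹ * (Γ * Hᵀ) = Ψ := by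
    rw [hH, responseCov, ← Matrix.mul_assoc, add_sub_cancel_right]
  have hcond_schur : Γ - Γ * Hᵀ * (responseCov Γ H Ψ)⁻¹ * (Γ * Hᵀ)ᵀ = conditionalCov Γ H Ψ := by
    rw [hB, conditionalCov, ← Matrix.mul_assoc]
  have hU := gaussPdf_fromBlocks₁₁ (B := Γ * Hᵀ) hΓ (hΨ_schur.symm ▸ hΨ) μ u (ξ + H *ᵥ μ) y
  have hY := gaussPdf_fromBlocks₂₂ (B := Γ * Hᵀ) (posDef_responseCov hΓ.posSemidef H hΨ)
    (hcond_schur.symm ▸ posDef_conditionalCov hΓ H hΨ) μ u (ξ + H *ᵥ μ) y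
  rw [hΨ_schur, hH, hmean] at hU
  rw [hcond_schur] at hY
  exact hU.symm.trans hY

end LinearGaussianModel

section Selection

open scoped ENNReal

lemma lintegral_cond_withDensity {α : Type*} [MeasurableSpace α] (ν : Measure α) {f g : α → ℝ≥0∞}
    (hf : Measurable f) (hg : Measurable g) {s : Set α} (hs : MeasurableSet s) :
    ∫⁻ x, g x ∂(ν.withDensity f)[|s] = (∫⁻ x in s, f x * g x ∂ν) / ν.withDensity f s := by
  rw [ProbabilityTheory.cond, lintegral_smul_measure,
    setLIntegral_withDensity_eq_setLIntegral_mul _ hf hg hs, smul_eq_mul, ENNReal.div_eq_inv_mul]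
  rfl

lemma map_add_prod_withDensity {α G : Type*} [MeasurableSpace α] [AddGroup G] [MeasurableSpace G]
    [MeasurableAdd₂ G] [MeasurableNeg G] (ρ : Measure α) [SFinite ρ] (ν : Measure G) [SFinite ν]
    [ν.IsAddLeftInvariant] {φ : α → G} (hφ : Measurable φ) {g : G → ℝ≥0∞} (hg : Measurable g) :
    (ρ.prod (ν.withDensity g)).map (fun p ↦ φ p.1 + p.2) =
      ν.withDensity fun y ↦ ∫⁻ x, g (-φ x + y) ∂ρ := by
  ext B hB
  have hind : Measurable (B.indicator (1 : G → ℝ≥0∞)) := measurable_one.indicator hB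
  calc (ρ.prod (ν.withDensity g)).map (fun p ↦ φ p.1 + p.2) B
      = ∫⁻ x, ∫⁻ w, g w * B.indicator 1 (φ x + w) ∂ν ∂ρ := by
        rw [← lintegral_indicator_one hB, lintegral_map hind (by fun_prop),
          lintegral_prod _ (by fun_prop)]
        refine lintegral_congr fun x ↦ ?_
        rw [lintegral_withDensity_eq_lintegral_mul _ hg (by fun_prop)]
        rfl
    _ = ∫⁻ x, ∫⁻ y, g (-φ x + y) * B.indicator 1 y ∂ν ∂ρ := by
        refine lintegral_congr fun x ↦ ?_
        rw [← lintegral_add_left_eq_self (fun y ↦ g (-φ x + y) * B.indicator 1 y) (φ x)]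
        simp only [neg_add_cancel_left]
    _ = ∫⁻ y, (∫⁻ x, g (-φ x + y) ∂ρ) * B.indicator 1 y ∂ν := by
        rw [lintegral_lintegral_swap (by fun_prop)]
        exact lintegral_congr fun y ↦ lintegral_mul_const _ (by fun_prop)
    _ = ν.withDensity (fun y ↦ ∫⁻ x, g (-φ x + y) ∂ρ) B := by
        rw [withDensity_apply _ hB, ← lintegral_indicator hB]
        exact lintegral_congr fun y ↦ by by_cases hy : y ∈ B <;> simp [hy]

variable {ι κ : Type*} [Fintype ι] [DecidableEq ι] [Fintype κ] [DecidableEq κ]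
  {Γ : Matrix ι ι ℝ} {Ψ : Matrix κ κ ℝ}

lemma map_cond_gaussMeasure_prod_gaussMeasure (hΓ : Γ.PosDef) (H : Matrix κ ι ℝ) (hΨ : Ψ.PosDef)
    (μ : ι → ℝ) (ξ : κ → ℝ) {s : Set (ι → ℝ)} (hs : MeasurableSet s) :
    ((gaussMeasure μ Γ)[|s].prod (gaussMeasure 0 Ψ)).map (fun p ↦ ξ + H *ᵥ p.1 + p.2) =
      volume.withDensity fun y ↦
        ENNReal.ofReal (gaussPdf (ξ + H *ᵥ μ) (responseCov Γ H Ψ) y) *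
          gaussMeasure (μ + regressionMatrix Γ H Ψ *ᵥ (y - (ξ + H *ᵥ μ))) (conditionalCov Γ H Ψ) s /
            gaussMeasure μ Γ s := by
  have hgauss (y : κ → ℝ) (u : ι → ℝ) :
      ENNReal.ofReal (gaussPdf μ Γ u) * ENNReal.ofReal (gaussPdf 0 Ψ (-(ξ + H *ᵥ u) + y)) =
        ENNReal.ofReal (gaussPdf (ξ + H *ᵥ μ) (responseCov Γ H Ψ) y) *
          ENNReal.ofReal (gaussPdf (μ + regressionMatrix Γ H Ψ *ᵥ (y - (ξ + H *ᵥ μ)))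
            (conditionalCov Γ H Ψ) u) := by
    rw [neg_add_eq_sub, gaussPdf_zero_sub, ← ENNReal.ofReal_mul (gaussPdf_pos hΓ _ _).le,
      gaussPdf_mul_gaussPdf_linear hΓ H hΨ, ENNReal.ofReal_mul
        (gaussPdf_pos (posDef_responseCov hΓ.posSemidef H hΨ) _ _).le]
  unfold gaussMeasure
  rw [map_add_prod_withDensity _ _ (φ := fun u ↦ ξ + H *ᵥ u)
    (Continuous.measurable (by fun_prop)) (by fun_prop)]
  congr 1 with y
  rw [lintegral_cond_withDensity _ (by fun_prop) (by fun_prop) hs]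
  simp only [hgauss, withDensity_apply _ hs]
  rw [lintegral_const_mul _ (by fun_prop)]

theorem sun_convolution_density_general (hΓ : Γ.PosDef) (H : Matrix κ ι ℝ) (hΨ : Ψ.PosDef)
    (μ τ : ι → ℝ) (ξ : κ → ℝ) :
    ((gaussMeasure μ Γ)[|{u | ∀ i, 0 < u i + τ i}].prod (gaussMeasure 0 Ψ)).map
        (fun p ↦ ξ + H *ᵥ p.1 + p.2) =
      volume.withDensity fun y ↦ ENNReal.ofReal
        (gaussPdf (ξ + H *ᵥ μ) (responseCov Γ H Ψ) y *
          gaussCdf (conditionalCov Γ H Ψ)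
            (μ + regressionMatrix Γ H Ψ *ᵥ (y - (ξ + H *ᵥ μ)) + τ) /
          gaussCdf Γ (μ + τ)) := by
  rw [map_cond_gaussMeasure_prod_gaussMeasure hΓ H hΨ μ ξ
    (isOpen_setOf_forall_pos_add τ).measurableSet]
  simp only [gaussMeasure_setOf_forall_pos_add hΓ,
    gaussMeasure_setOf_forall_pos_add (posDef_conditionalCov hΓ H hΨ),
    ENNReal.ofReal_div_of_pos (gaussCdf_pos hΓ _),
    ENNReal.ofReal_mul (gaussPdf_pos (posDef_responseCov hΓ.posSemidef H hΨ) _ _).le]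

end Selection

/-- the density of `Y = ξ + H U + W`, with `U =_d (W₀ | W₀ + τ > 0)`,
`W₀ ~ N_m(0, Γ̄)`, `W ~ N_d(0, Ψ)` independent, is the SUN density
`φ_d(y; ξ, Ψ + HΓ̄Hᵀ) Φ_m(μ(y)+τ; 0, Σ*) / Φ_m(τ; 0, Γ̄)`. -/
theorem sun_convolution_density
    (d m : ℕ) (ξ : Fin d → ℝ) (τ : Fin m → ℝ) (H : Matrix (Fin d) (Fin m) ℝ)
    (Ψ : Matrix (Fin d) (Fin d) ℝ) (Γ : Matrix (Fin m) (Fin m) ℝ)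
    (hΨ : Ψ.PosDef) (hΓ : Γ.PosDef) :
    Measure.map (fun p : (Fin m → ℝ) × (Fin d → ℝ) => ξ + H *ᵥ p.1 + p.2)
        ((ProbabilityTheory.cond
            (volume.withDensity fun u => ENNReal.ofReal (gaussPdf (0 : Fin m → ℝ) Γ u))
            {u : Fin m → ℝ | ∀ i, 0 < u i + τ i}).prod
          (volume.withDensity fun w => ENNReal.ofReal (gaussPdf (0 : Fin d → ℝ) Ψ w))) =
      volume.withDensity (fun y => ENNReal.ofReal
        (gaussPdf ξ (Ψ + H * Γ * Hᵀ) y *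
          gaussCdf (Γ - Γ * Hᵀ * (Ψ + H * Γ * Hᵀ)⁻¹ * H * Γ)
            ((Γ * Hᵀ * (Ψ + H * Γ * Hᵀ)⁻¹) *ᵥ (y - ξ) + τ) /
          gaussCdf Γ τ)) := by
  simpa [gaussMeasure, responseCov, regressionMatrix, conditionalCov] using
    sun_convolution_density_general hΓ H hΨ 0 τ ξ
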